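/- For |r| < 1, define the mapping T_r on the space L^∞([0,∞)) of bounded measurable functions on [0,∞) with the supremum norm by (T_r F)(x) = P[W_1 ≤ x] + r/(1−r) − r ∫_x^∞ F(y−x) dF_X(y). Then for any two bounded measurable functions F₁, F₂ on [0,∞), ‖T_r F₁ − T_r F₂‖_∞ ≤ |r| · P[X > 0] · ‖F₁ − F₂‖_∞. In particular, since |r| < 1 and P[X > 0] < 1, T_r is a contraction mapping on L^∞([0,∞)) with contraction coefficient |r|·P[X > 0]. -/

import Mathlib

open MeasureTheory ProbabilityTheory

/-- The mapping `T_r` : `(T_r F)(x) = P[W_1 ≤ x] + r/(1−r) − r ∫_x^∞ F(y−x) dF_X(y)`,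
where `cdfW1 x = P[W_1 ≤ x]` and `ν` is the law of `X` (so that the
Stieltjes integral `∫_x^∞ · dF_X` is the integral over `(x,∞)` against `ν`). -/
noncomputable def lindleyTypeMap (ν : Measure ℝ) (cdfW1 : ℝ → ℝ) (r : ℝ)
    (F : ℝ → ℝ) (x : ℝ) : ℝ :=
  cdfW1 x + r / (1 - r) - r * ∫ y in Set.Ioi x, F (y - x) ∂ν

/-- For `|r| < 1`, the mapping `T_r` on `L^∞([0,∞))` given by
`(T_r F)(x) = P[W_1 ≤ x] + r/(1−r) − r ∫_x^∞ F(y−x) dF_X(y)` satisfies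
`‖T_r F₁ − T_r F₂‖_∞ ≤ |r| · P[X > 0] · ‖F₁ − F₂‖_∞` for all bounded
measurable `F₁, F₂` on `[0,∞)`; in particular, since `|r| < 1` and
`P[X > 0] < 1`, it is a contraction with coefficient `|r| · P[X > 0]`. -/
theorem lindleyTypeMap_contraction
    {Ω : Type*} [MeasureSpace Ω] [IsProbabilityMeasure (ℙ : Measure Ω)]
    (X W1 : Ω → ℝ) (hX : Measurable X)
    (hX0 : 0 < ℙ {ω | X ω ≤ 0}) (hX1 : ℙ {ω | X ω ≤ 0} < 1)
    (r : ℝ) (hr : |r| < 1)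
    (F₁ F₂ : ℝ → ℝ) (hF₁ : Measurable F₁) (hF₂ : Measurable F₂)
    (hF₁bdd : ∃ M, ∀ x, |F₁ x| ≤ M) (hF₂bdd : ∃ M, ∀ x, |F₂ x| ≤ M) :
    (⨆ x : Set.Ici (0 : ℝ),
        |lindleyTypeMap (Measure.map X ℙ) (fun t => (ℙ {ω | W1 ω ≤ t}).toReal) r F₁ x -
         lindleyTypeMap (Measure.map X ℙ) (fun t => (ℙ {ω | W1 ω ≤ t}).toReal) r F₂ x|) ≤
      |r| * (ℙ {ω | 0 < X ω}).toReal * ⨆ x : Set.Ici (0 : ℝ), |F₁ x - F₂ x| := by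
  obtain ⟨M₁, hM₁⟩ := hF₁bdd
  obtain ⟨M₂, hM₂⟩ := hF₂bdd
  have : IsProbabilityMeasure (Measure.map X (ℙ : Measure Ω)) :=
    Measure.isProbabilityMeasure_map hX.aemeasurable
  have hbdd : BddAbove (Set.range fun x : Set.Ici (0 : ℝ) => |F₁ x - F₂ x|) := by
    refine ⟨M₁ + M₂, ?_⟩
    rintro _ ⟨x, rfl⟩
    exact (abs_sub _ _).trans (add_le_add (hM₁ _) (hM₂ _))
  set S : ℝ := ⨆ x : Set.Ici (0 : ℝ), |F₁ x - F₂ x| with hS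
  have hle : ∀ t : ℝ, 0 ≤ t → |F₁ t - F₂ t| ≤ S := fun t ht =>
    le_ciSup hbdd (⟨t, ht⟩ : Set.Ici (0 : ℝ))
  have hS0 : 0 ≤ S := (abs_nonneg _).trans (hle 0 le_rfl)
  have : Nonempty (Set.Ici (0 : ℝ)) := ⟨⟨0, Set.self_mem_Ici⟩⟩
  refine ciSup_le ?_
  rintro ⟨x, hx⟩
  have hx' : (0 : ℝ) ≤ x := hx
  set ν : Measure ℝ := Measure.map X (ℙ : Measure Ω) with hν
  have hint : ∀ (F : ℝ → ℝ) (M : ℝ), Measurable F → (∀ x, |F x| ≤ M) →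
      Integrable (fun y => F (y - x)) (ν.restrict (Set.Ioi x)) := by
    intro F M hF hM
    refine Integrable.of_bound (C := M) ?_ ?_
    · exact (hF.comp (measurable_id.sub_const x)).aestronglyMeasurable
    · exact Filter.Eventually.of_forall fun y => hM _
  have hdiff : lindleyTypeMap ν (fun t => (ℙ {ω | W1 ω ≤ t}).toReal) r F₁ x -
      lindleyTypeMap ν (fun t => (ℙ {ω | W1 ω ≤ t}).toReal) r F₂ x =
      - (r * ∫ y in Set.Ioi x, (F₁ (y - x) - F₂ (y - x)) ∂ν) := by
    rw [integral_sub (hint F₁ M₁ hF₁ hM₁) (hint F₂ M₂ hF₂ hM₂)]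
    unfold lindleyTypeMap
    ring
  have hI : |∫ y in Set.Ioi x, (F₁ (y - x) - F₂ (y - x)) ∂ν| ≤ S * ν.real (Set.Ioi x) := by
    have := norm_setIntegral_le_of_norm_le_const (μ := ν) (s := Set.Ioi x) (C := S)
      (f := fun y => F₁ (y - x) - F₂ (y - x)) (measure_lt_top _ _)
      (fun y hy => hle (y - x) (sub_nonneg.2 (le_of_lt hy)))
    exact this
  have hν0 : ν.real (Set.Ioi x) ≤ (ℙ {ω | 0 < X ω}).toReal := by
    have h0 : ν.real (Set.Ioi 0) = (ℙ {ω | 0 < X ω}).toReal := by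
      rw [measureReal_def, hν, Measure.map_apply hX measurableSet_Ioi]
      rfl
    rw [← h0]
    exact measureReal_mono (Set.Ioi_subset_Ioi hx')
  change |lindleyTypeMap ν (fun t => (ℙ {ω | W1 ω ≤ t}).toReal) r F₁ x -
      lindleyTypeMap ν (fun t => (ℙ {ω | W1 ω ≤ t}).toReal) r F₂ x| ≤ _
  rw [hdiff, abs_neg, abs_mul, mul_assoc]
  refine mul_le_mul_of_nonneg_left (hI.trans ?_) (abs_nonneg r)
  rw [mul_comm]
  exact mul_le_mul_of_nonneg_right hν0 hS0
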